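/- Let d ≥ 2 and let p = (p_0,…,p_{d−1}) be a probability distribution. For j,l ∈ {0,…,d−1} define the unit vectors |φ_{jl}⟩ = ∑_{k=0}^{d−1} √(p_k) e^{2πi k(j+l)/d} |k⟩ ∈ ℂ^d. Then for every probability distribution r = (r_{jl}) on {0,…,d−1}²: 2·(−∑_{j,l} r_{jl} log₂ r_{jl}) − H(∑_{j,l} r_{jl} |φ_{jl}⟩⟨φ_{jl}|) ≤ 4 log₂ d − H(p), where H(p) = −∑_k p_k log₂ p_k and H of a matrix denotes von Neumann entropy; equality holds for the uniform distribution r_{jl} = 1/d². In particular, the maximum over all probability distributions r of 2H(r) − H(∑_{jl} r_{jl} φ_{jl}) equals 4 log₂ d − H(p). -/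

import Mathlib

/-!
The averaged environment state is `ρ = A Aᴴ` with `A = P^{1/2} F R^{1/2}`, where `P = diag p`,
`R = diag r` and `F` is the `d × d²` matrix of phases `e^{2πi k(j+l)/d}`, which satisfies
`F Fᴴ = d² • 1`. Since `H(r) ≤ 2 log d`, the upper bound follows from the entropic inequality
`H(p) + H(r) ≤ H(ρ) + log d²` (`phase_flip_entropy_le`). That inequality is the data-processing
inequality `D(ρ ‖ P) ≤ D(r ‖ uniform)` for the map preparing the states `φ_{jl}`, as `P` is both the
uniform mixture and the diagonal of `ρ`.

It is proved here by complex interpolation, for any matrix `F` with unimodular entries and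
`F Fᴴ = N • 1` (`entropy_add_le`). The function `G w = Tr (ρ^w P^{1/2} F R^{1-w} Fᴴ P^{1/2-w})`
is bounded on the strip `0 ≤ re w ≤ 1/2`, satisfies `|G| ≤ 1` on the left edge and `|G| ≤ √N` on the
right edge, both by Cauchy–Schwarz, and `G 0 = 1`. By the Phragmén–Lindelöf principle
`|G w| ≤ N ^ re w`, so `G' 0 ≤ log N`, and `G' 0 = H(p) + H(r) - H(ρ)` in natural logarithms.

For uniform `r` orthogonality of characters gives `ρ = P`, so `H(ρ) = H(p)` and equality holds.
-/

open Matrix ComplexOrder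

noncomputable section

/-- outer product `|v⟩⟨v|`. -/
def proj {ι : Type*} (v : ι → ℂ) : Matrix ι ι ℂ :=
  Matrix.of fun i j => v i * star (v j)

/-- von Neumann entropy (base 2), via the eigenvalues of a Hermitian matrix. -/
def vnEntropy {ι : Type*} [Fintype ι] [DecidableEq ι] (A : Matrix ι ι ℂ) : ℝ :=
  if h : A.IsHermitian then -∑ i, h.eigenvalues i * Real.logb 2 (h.eigenvalues i) else 0

/-- The environment states `|φ_{jl}⟩ = ∑_k √(p_k) e^{2πi k(j+l)/d} |k⟩` of the
collective phase-flip channel. -/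
def phiVec {d : ℕ} (p : Fin d → ℝ) (j l : Fin d) : Fin d → ℂ :=
  fun k => (Real.sqrt (p k) : ℂ) *
    Complex.exp (2 * Real.pi * Complex.I * (k : ℕ) * ((j : ℕ) + (l : ℕ)) / d)

/-! ### Powers with complex exponent and the strip principle -/

/-- The entire function `z ↦ x ^ z` of the exponent, with the convention that it vanishes identically
when `x = 0` (unlike `Complex.cpow`, for which `0 ^ 0 = 1`). -/
def zpw (x : ℝ) (z : ℂ) : ℂ := if x = 0 then 0 else Complex.exp (z * Real.log x)

lemma norm_zpw {x : ℝ} (hx : 0 < x) (z : ℂ) : ‖zpw x z‖ = x ^ z.re := by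
  rw [zpw, if_neg hx.ne', Complex.norm_exp, Complex.re_mul_ofReal, Real.rpow_def_of_pos hx, mul_comm]

lemma norm_zpw_le_one {x : ℝ} (hx : 0 ≤ x) (hx1 : x ≤ 1) {z : ℂ} (hz : 0 ≤ z.re) :
    ‖zpw x z‖ ≤ 1 := by
  rcases hx.eq_or_lt with rfl | h
  · simp [zpw]
  · rw [norm_zpw h]; exact Real.rpow_le_one hx hx1 hz

lemma norm_zpw_sq_of_half {x : ℝ} (hx : 0 ≤ x) {z : ℂ} (hz : z.re = 1 / 2) :
    ‖zpw x z‖ ^ 2 = x := by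
  rcases hx.eq_or_lt with rfl | h
  · simp [zpw]
  · rw [norm_zpw h, hz, ← Real.sqrt_eq_rpow, Real.sq_sqrt hx]

lemma zpw_half {x : ℝ} (hx : 0 ≤ x) : zpw x (1 / 2) = (Real.sqrt x : ℂ) := by
  rcases hx.eq_or_lt with rfl | h
  · simp [zpw]
  · rw [zpw, if_neg h.ne', Real.sqrt_eq_rpow, Real.rpow_def_of_pos h]
    push_cast
    congr 1
    ring

lemma hasDerivAt_zpw (x : ℝ) (z : ℂ) : HasDerivAt (zpw x) (Real.log x * zpw x z) z := by
  unfold zpw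
  split_ifs with h
  · simpa using hasDerivAt_const z (0 : ℂ)
  · have := ((hasDerivAt_id z).mul_const (Real.log x : ℂ)).cexp
    simpa [mul_comm] using this

lemma hasDerivAt_zpw_half_sub (x : ℝ) (z : ℂ) :
    HasDerivAt (fun w => zpw x (1 / 2 - w)) (-(Real.log x * zpw x (1 / 2 - z))) z := by
  have h := (hasDerivAt_zpw x (1 / 2 - z)).comp z ((hasDerivAt_id z).const_sub (1 / 2 : ℂ))
  simpa [Function.comp_def] using h

/-- Boundary form of the Phragmén–Lindelöf principle on the strip `0 ≤ re z ≤ 1/2`: an entire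
function bounded on the strip, of modulus at most `1` on both edges and equal to `1` at `0`, has
modulus at most `1` throughout the strip, so its real part cannot increase when entering from `0`. -/
lemma re_deriv_nonpos_of_strip {g : ℂ → ℂ} {g' : ℂ} {C : ℝ} (hg : Differentiable ℂ g)
    (hg' : HasDerivAt g g' 0) (h0 : g 0 = 1)
    (hC : ∀ z : ℂ, 0 ≤ z.re → z.re ≤ 1 / 2 → ‖g z‖ ≤ C)
    (hl : ∀ z : ℂ, z.re = 0 → ‖g z‖ ≤ 1) (hr : ∀ z : ℂ, z.re = 1 / 2 → ‖g z‖ ≤ 1) :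
    g'.re ≤ 0 := by
  have hstrip : ∀ z : ℂ, 0 ≤ z.re → z.re ≤ 1 / 2 → ‖g z‖ ≤ 1 := by
    intro z h1 h2
    refine PhragmenLindelof.vertical_strip (a := 0) (b := 1 / 2) hg.diffContOnCl ?_ hl hr h1 h2
    refine ⟨0, by positivity, 0, ?_⟩
    refine Asymptotics.IsBigO.of_bound C ?_
    refine Filter.mem_inf_of_right ?_
    intro z hz
    simpa using hC z hz.1.le hz.2.le
  have hre : HasDerivAt (fun t : ℝ => (g t).re) g'.re 0 := by
    have : HasDerivAt g g' ((0 : ℝ) : ℂ) := by simpa using hg'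
    exact this.real_of_complex
  have ht := (hasDerivAt_iff_tendsto_slope.1 hre).mono_left
    (nhdsWithin_mono (0 : ℝ) (fun x (hx : x ∈ Set.Ioi (0 : ℝ)) => (ne_of_gt hx : x ≠ 0)))
  refine le_of_tendsto ht ?_
  filter_upwards [Ioo_mem_nhdsGT (show (0 : ℝ) < 1 / 2 by norm_num)] with t ht
  rw [slope_def_field]
  refine div_nonpos_of_nonpos_of_nonneg ?_ (by linarith [ht.1])
  have h1 : (g t).re ≤ 1 :=
    (Complex.re_le_norm _).trans (hstrip t (by simpa using ht.1.le) (by simpa using ht.2.le))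
  simp [h0, h1]

/-! ### The entropic inequality -/

section Entropic


lemma sum_row_normSq {m n : Type*} [Fintype n] (M : Matrix m n ℂ) (i : m) :
    ((∑ j, ‖M i j‖ ^ 2 : ℝ) : ℂ) = (M * Mᴴ) i i := by
  simp [Matrix.mul_apply, Complex.mul_conj, Complex.normSq_eq_norm_sq]

lemma sum_col_normSq {m n : Type*} [Fintype m] (M : Matrix m n ℂ) (j : n) :
    ((∑ i, ‖M i j‖ ^ 2 : ℝ) : ℂ) = (Mᴴ * M) j j := by
  simp [Matrix.mul_apply, mul_comm, Complex.mul_conj, Complex.normSq_eq_norm_sq]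

lemma sum_row_normSq_mul_unitary {ι κ : Type*} [Fintype ι] [DecidableEq ι] (M : Matrix κ ι ℂ)
    {U : Matrix ι ι ℂ} (hU : U * Uᴴ = 1) (m : κ) :
    ∑ i, ‖(M * U) m i‖ ^ 2 = ∑ k, ‖M m k‖ ^ 2 := by
  have h : (M * U) * (M * U)ᴴ = M * Mᴴ := by
    rw [Matrix.conjTranspose_mul, Matrix.mul_assoc, ← Matrix.mul_assoc U, hU, Matrix.one_mul]
  exact_mod_cast (by rw [sum_row_normSq, sum_row_normSq, h] :
    ((∑ i, ‖(M * U) m i‖ ^ 2 : ℝ) : ℂ) = ((∑ k, ‖M m k‖ ^ 2 : ℝ) : ℂ))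

variable {ι κ : Type*} [Fintype ι] [Fintype κ]

/-- Cauchy–Schwarz for a double sum of products, from bounds on the two sums of squares. -/
lemma norm_sum_mul_le {f g : ι → κ → ℂ} {a b : ℝ} (hf : ∑ i, ∑ m, ‖f i m‖ ^ 2 ≤ a)
    (hg : ∑ i, ∑ m, ‖g i m‖ ^ 2 ≤ b) :
    ‖∑ i, ∑ m, f i m * g i m‖ ≤ Real.sqrt a * Real.sqrt b := by
  rw [← Fintype.sum_prod_type'] at hf hg ⊢
  calc ‖∑ x : ι × κ, f x.1 x.2 * g x.1 x.2‖ ≤ ∑ x : ι × κ, ‖f x.1 x.2‖ * ‖g x.1 x.2‖ :=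
        (norm_sum_le _ _).trans_eq (by simp)
    _ ≤ Real.sqrt (∑ x : ι × κ, ‖f x.1 x.2‖ ^ 2) * Real.sqrt (∑ x : ι × κ, ‖g x.1 x.2‖ ^ 2) :=
        Real.sum_mul_le_sqrt_mul_sqrt _ _ _
    _ ≤ _ := by gcongr

/-- The matrix `P^{1/2} F S^{1/2}` for `P = diag p`, `S = diag s`; its column at `m` is the vector
`√(s m) ∑ k, √(p k) F k m |k⟩`. -/
def ampMat (p : ι → ℝ) (s : κ → ℝ) (F : Matrix ι κ ℂ) : Matrix ι κ ℂ :=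
  Matrix.of fun k m => (Real.sqrt (p k) : ℂ) * F k m * (Real.sqrt (s m) : ℂ)

/-- The matrix `S^{1/2-w} Fᴴ P^{1/2-w}`, entire in `w`; at `w = 0` it is the adjoint of `ampMat`. -/
def dualMat (p : ι → ℝ) (s : κ → ℝ) (F : Matrix ι κ ℂ) (w : ℂ) : Matrix κ ι ℂ :=
  Matrix.of fun m k => zpw (s m) (1 / 2 - w) * star (F k m) * zpw (p k) (1 / 2 - w)

/-- The function `w ↦ Tr (ρ^w P^{1/2} F S^{1-w} Fᴴ P^{1/2-w})` for `ρ = A Aᴴ`, `A = ampMat p s F`,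
written in an eigenbasis `U` of `ρ` with eigenvalues `lam`. -/
def interp (p : ι → ℝ) (s : κ → ℝ) (F : Matrix ι κ ℂ) (U : Matrix ι ι ℂ) (lam : ι → ℝ)
    (w : ℂ) : ℂ :=
  ∑ i, ∑ m, (zpw (lam i) w * (Uᴴ * ampMat p s F) i m) * (dualMat p s F w * U) m i

variable {p : ι → ℝ} {s : κ → ℝ} {F : Matrix ι κ ℂ} {U : Matrix ι ι ℂ} {lam : ι → ℝ} {N : ℝ}

omit [Fintype ι] [Fintype κ] in
lemma dualMat_zero (hp : ∀ k, 0 ≤ p k) (hs : ∀ m, 0 ≤ s m) :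
    dualMat p s F 0 = (ampMat p s F)ᴴ := by
  ext m k
  simp only [dualMat, ampMat, Matrix.of_apply, sub_zero, Matrix.conjTranspose_apply, star_mul',
    zpw_half (hp k), zpw_half (hs m)]
  simp
  ring

omit [Fintype ι] in
lemma ampMat_mul_self_diag (hp : ∀ k, 0 ≤ p k) (hs : ∀ m, 0 ≤ s m) (hs1 : ∑ m, s m = 1)
    (hF : ∀ k m, ‖F k m‖ = 1) (k : ι) :
    (ampMat p s F * (ampMat p s F)ᴴ) k k = p k := by
  rw [← sum_row_normSq]
  simp [ampMat, hF, mul_pow, Real.sq_sqrt, hp, hs, ← Finset.mul_sum, hs1]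

omit [Fintype κ] in
lemma ampMat_self_mul_diag (hp : ∀ k, 0 ≤ p k) (hs : ∀ m, 0 ≤ s m) (hp1 : ∑ m, p m = 1)
    (hF : ∀ k m, ‖F k m‖ = 1) (m : κ) :
    ((ampMat p s F)ᴴ * ampMat p s F) m m = s m := by
  rw [← sum_col_normSq]
  simp [ampMat, hF, mul_pow, Real.sq_sqrt, hp, hs, ← Finset.sum_mul, hp1]

variable [DecidableEq ι]

/-- The squared norms of the rows of `Uᴴ A` are the eigenvalues of `A Aᴴ`, because
`(Uᴴ A) (Uᴴ A)ᴴ = Uᴴ (A Aᴴ) U` is diagonal. -/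
lemma sum_normSq_eigenrow (hU' : Uᴴ * U = 1)
    (hA : ampMat p s F * (ampMat p s F)ᴴ = U * Matrix.diagonal (fun i => (lam i : ℂ)) * Uᴴ)
    (i : ι) : ∑ m, ‖(Uᴴ * ampMat p s F) i m‖ ^ 2 = lam i := by
  have h : (Uᴴ * ampMat p s F) * (Uᴴ * ampMat p s F)ᴴ
      = Matrix.diagonal (fun i => (lam i : ℂ)) := by
    rw [Matrix.conjTranspose_mul, Matrix.conjTranspose_conjTranspose, Matrix.mul_assoc,
      ← Matrix.mul_assoc (ampMat p s F), hA]
    simp only [Matrix.mul_assoc, hU', Matrix.mul_one]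
    rw [← Matrix.mul_assoc, hU', Matrix.one_mul]
  exact_mod_cast (by rw [sum_row_normSq, h]; simp :
    ((∑ m, ‖(Uᴴ * ampMat p s F) i m‖ ^ 2 : ℝ) : ℂ) = (lam i : ℂ))

lemma sum_eigenvalues (hp : ∀ k, 0 ≤ p k) (hp1 : ∑ k, p k = 1) (hs : ∀ m, 0 ≤ s m)
    (hs1 : ∑ m, s m = 1) (hF : ∀ k m, ‖F k m‖ = 1) (hU' : Uᴴ * U = 1)
    (hA : ampMat p s F * (ampMat p s F)ᴴ = U * Matrix.diagonal (fun i => (lam i : ℂ)) * Uᴴ) :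
    ∑ i, lam i = 1 := by
  have h := congrArg Matrix.trace hA
  rw [Matrix.trace_mul_comm (U * _), ← Matrix.mul_assoc, hU', Matrix.one_mul] at h
  simp only [Matrix.trace, Matrix.diag, ampMat_mul_self_diag hp hs hs1 hF,
    Matrix.diagonal_apply_eq, ← Complex.ofReal_sum, hp1] at h
  exact_mod_cast h.symm

omit [DecidableEq ι] [Fintype κ] in
lemma sum_normSq_dualMat_row (w : ℂ) (m : κ) :
    ∑ k, ‖dualMat p s F w m k‖ ^ 2 =
      ∑ k, (‖zpw (s m) (1 / 2 - w)‖ * ‖F k m‖ * ‖zpw (p k) (1 / 2 - w)‖) ^ 2 := by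
  simp [dualMat]

/-- On the edge `re w = 0` the power of `ρ` is a contraction, and both `A` and `dualMat` have
Hilbert–Schmidt norm `1`. -/
lemma norm_interp_le_left (hp : ∀ k, 0 ≤ p k) (hp1 : ∑ k, p k = 1) (hs : ∀ m, 0 ≤ s m)
    (hs1 : ∑ m, s m = 1) (hF : ∀ k m, ‖F k m‖ = 1) (hU : U * Uᴴ = 1) (hU' : Uᴴ * U = 1)
    (hA : ampMat p s F * (ampMat p s F)ᴴ = U * Matrix.diagonal (fun i => (lam i : ℂ)) * Uᴴ)
    (hlam : ∀ i, 0 ≤ lam i) (hlam1 : ∀ i, lam i ≤ 1) {w : ℂ} (hw : w.re = 0) :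
    ‖interp p s F U lam w‖ ≤ 1 := by
  have hw' : (1 / 2 - w).re = 1 / 2 := by simp [hw]
  have h1 : ∑ i, ∑ m, ‖zpw (lam i) w * (Uᴴ * ampMat p s F) i m‖ ^ 2 ≤ 1 := by
    rw [← sum_eigenvalues hp hp1 hs hs1 hF hU' hA]
    refine Finset.sum_le_sum fun i _ => ?_
    refine le_of_le_of_eq ?_ (sum_normSq_eigenrow hU' hA i)
    gcongr with m
    rw [norm_mul]
    exact mul_le_of_le_one_left (norm_nonneg _) (norm_zpw_le_one (hlam i) (hlam1 i) hw.ge)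
  have h2 : ∑ i, ∑ m, ‖(dualMat p s F w * U) m i‖ ^ 2 ≤ 1 := by
    rw [Finset.sum_comm]
    simp_rw [sum_row_normSq_mul_unitary _ hU, sum_normSq_dualMat_row, mul_pow, hF,
      norm_zpw_sq_of_half (hp _) hw', norm_zpw_sq_of_half (hs _) hw']
    simp [← Finset.mul_sum, hp1, hs1]
  simpa [interp] using norm_sum_mul_le h1 h2

/-- On the edge `re w = 1/2` the factors `ρ^w` and `A` have Hilbert–Schmidt norm `1`, the powers of
`P` and `S` are contractions, and `Fᴴ` is `√N` times an isometry. -/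
lemma norm_interp_le_right (hp : ∀ k, 0 ≤ p k) (hp1 : ∑ k, p k = 1) (hs : ∀ m, 0 ≤ s m)
    (hs1 : ∑ m, s m = 1) (hF : ∀ k m, ‖F k m‖ = 1) (hU' : Uᴴ * U = 1)
    (hN : 0 ≤ N) (hFF : F * Fᴴ = (N : ℂ) • 1)
    (hA : ampMat p s F * (ampMat p s F)ᴴ = U * Matrix.diagonal (fun i => (lam i : ℂ)) * Uᴴ)
    (hlam : ∀ i, 0 ≤ lam i) (hsle : ∀ m, s m ≤ 1) (hple : ∀ k, p k ≤ 1)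
    {w : ℂ} (hw : w.re = 1 / 2) :
    ‖interp p s F U lam w‖ ≤ Real.sqrt N := by
  have hw' : (1 / 2 - w).re = 0 := by simp [hw]
  have hlam1 := sum_eigenvalues hp hp1 hs hs1 hF hU' hA
  have h1 : ∑ i, ∑ m, ‖(Uᴴ * ampMat p s F) i m‖ ^ 2 ≤ 1 := by
    simp_rw [sum_normSq_eigenrow hU' hA, hlam1, le_refl]
  have hcol : ∀ i, ∑ m, ‖(dualMat p s F w * U) m i‖ ^ 2 ≤ N := by
    intro i
    let c : Matrix ι Unit ℂ := Matrix.of fun k _ => zpw (p k) (1 / 2 - w) * U k i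
    have hc : ∑ k, ‖c k ()‖ ^ 2 ≤ 1 := by
      have hUi : ∑ k, ‖U k i‖ ^ 2 = 1 := by
        exact_mod_cast (by rw [sum_col_normSq, hU']; simp :
          ((∑ k, ‖U k i‖ ^ 2 : ℝ) : ℂ) = ((1 : ℝ) : ℂ))
      rw [← hUi]
      gcongr with k
      simp only [c, Matrix.of_apply, norm_mul]
      exact mul_le_of_le_one_left (norm_nonneg _) (norm_zpw_le_one (hp k) (hple k) hw'.ge)
    have hFc : ∑ m, ‖(Fᴴ * c) m ()‖ ^ 2 = N * ∑ k, ‖c k ()‖ ^ 2 := by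
      have : ((∑ m, ‖(Fᴴ * c) m ()‖ ^ 2 : ℝ) : ℂ) = ((N * ∑ k, ‖c k ()‖ ^ 2 : ℝ) : ℂ) := by
        rw [Complex.ofReal_mul, sum_col_normSq, sum_col_normSq, Matrix.conjTranspose_mul,
          Matrix.conjTranspose_conjTranspose, Matrix.mul_assoc, ← Matrix.mul_assoc F, hFF]
        simp
      exact_mod_cast this
    calc ∑ m, ‖(dualMat p s F w * U) m i‖ ^ 2 ≤ ∑ m, ‖(Fᴴ * c) m ()‖ ^ 2 := by
          gcongr with m
          have : (dualMat p s F w * U) m i = zpw (s m) (1 / 2 - w) * (Fᴴ * c) m () := by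
            simp only [Matrix.mul_apply, dualMat, c, Matrix.of_apply, Matrix.conjTranspose_apply,
              Finset.mul_sum]
            exact Finset.sum_congr rfl fun k _ => by ring
          rw [this, norm_mul]
          exact mul_le_of_le_one_left (norm_nonneg _) (norm_zpw_le_one (hs m) (hsle m) hw'.ge)
      _ ≤ N := by rw [hFc]; exact mul_le_of_le_one_right hN hc
  have h2 : ∑ i, ∑ m, ‖zpw (lam i) w * (dualMat p s F w * U) m i‖ ^ 2 ≤ N := by
    calc _ = ∑ i, lam i * ∑ m, ‖(dualMat p s F w * U) m i‖ ^ 2 := by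
          simp_rw [norm_mul, mul_pow, norm_zpw_sq_of_half (hlam _) hw, Finset.mul_sum]
      _ ≤ ∑ i, lam i * N := by
          gcongr with i
          · exact hlam i
          · exact hcol i
      _ = N := by rw [← Finset.sum_mul, hlam1, one_mul]
  have := norm_sum_mul_le h1 h2
  rw [Real.sqrt_one, one_mul] at this
  refine le_of_eq_of_le ?_ this
  unfold interp
  congr 1
  exact Finset.sum_congr rfl fun i _ => Finset.sum_congr rfl fun m _ => by ring

omit [DecidableEq ι] in
lemma exists_norm_interp_le (hp : ∀ k, 0 ≤ p k) (hs : ∀ m, 0 ≤ s m)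
    (hlam : ∀ i, 0 ≤ lam i) (hsle : ∀ m, s m ≤ 1) (hple : ∀ k, p k ≤ 1) (hlam1 : ∀ i, lam i ≤ 1) :
    ∃ C : ℝ, ∀ w : ℂ, 0 ≤ w.re → w.re ≤ 1 / 2 → ‖interp p s F U lam w‖ ≤ C := by
  refine ⟨∑ i, ∑ m, (1 * ‖(Uᴴ * ampMat p s F) i m‖) * ∑ k, (1 * ‖F k m‖ * 1) * ‖U k i‖, ?_⟩
  intro w h0 h1
  have h1' : 0 ≤ (1 / 2 - w).re := by simpa using h1
  refine (norm_sum_le _ _).trans (Finset.sum_le_sum fun i _ => ?_)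
  refine (norm_sum_le _ _).trans (Finset.sum_le_sum fun m _ => ?_)
  rw [norm_mul, norm_mul]
  gcongr
  · exact norm_zpw_le_one (hlam i) (hlam1 i) h0
  · rw [Matrix.mul_apply]
    refine (norm_sum_le _ _).trans (Finset.sum_le_sum fun k _ => ?_)
    simp only [dualMat, Matrix.of_apply, norm_mul, norm_star]
    gcongr
    · exact norm_zpw_le_one (hs m) (hsle m) h1'
    · exact norm_zpw_le_one (hp k) (hple k) h1'

omit [Fintype κ] in
/-- The derivative of `w ↦ S^{1/2-w} Fᴴ P^{1/2-w} U`, entrywise. -/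
lemma hasDerivAt_dualMat_mul (m : κ) (i : ι) (w : ℂ) :
    HasDerivAt (fun w => (dualMat p s F w * U) m i)
      (-(Real.log (s m) * (dualMat p s F w * U) m i) -
        (dualMat p s F w * (Matrix.diagonal (fun k => (Real.log (p k) : ℂ)) * U)) m i) w := by
  have e (w : ℂ) (V : Matrix ι ι ℂ) : (dualMat p s F w * V) m i =
      ∑ k, zpw (s m) (1 / 2 - w) * star (F k m) * zpw (p k) (1 / 2 - w) * V k i := by
    simp only [Matrix.mul_apply, dualMat, Matrix.of_apply]
  simp only [e, Matrix.diagonal_mul]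
  have h := HasDerivAt.fun_sum (u := Finset.univ) fun k (_ : k ∈ Finset.univ) =>
    (((hasDerivAt_zpw_half_sub (s m) w).mul_const (star (F k m))).mul
      (hasDerivAt_zpw_half_sub (p k) w)).mul_const (U k i)
  refine h.congr_deriv ?_
  rw [Finset.mul_sum, ← Finset.sum_neg_distrib, ← Finset.sum_sub_distrib]
  exact Finset.sum_congr rfl fun k _ => by ring

lemma differentiable_interp : Differentiable ℂ (interp p s F U lam) := by
  intro w
  unfold interp
  refine DifferentiableAt.fun_sum fun i _ => DifferentiableAt.fun_sum fun m _ => ?_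
  exact ((hasDerivAt_zpw (lam i) w).differentiableAt.mul_const _).mul
    (hasDerivAt_dualMat_mul m i w).differentiableAt

/-- Rows of `Uᴴ A` with eigenvalue `0` vanish, so the convention `zpw 0 0 = 0` is harmless. -/
lemma zpw_zero_mul_eigenrow (hU' : Uᴴ * U = 1)
    (hA : ampMat p s F * (ampMat p s F)ᴴ = U * Matrix.diagonal (fun i => (lam i : ℂ)) * Uᴴ)
    (i : ι) (m : κ) :
    zpw (lam i) 0 * (Uᴴ * ampMat p s F) i m = (Uᴴ * ampMat p s F) i m := by
  by_cases h : lam i = 0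
  · have h0 := sum_normSq_eigenrow hU' hA i
    rw [h, Finset.sum_eq_zero_iff_of_nonneg (fun _ _ => by positivity)] at h0
    have : (Uᴴ * ampMat p s F) i m = 0 := by simpa using h0 m (Finset.mem_univ m)
    rw [this, mul_zero]
  · simp [zpw, h]

lemma interp_zero (hp : ∀ k, 0 ≤ p k) (hp1 : ∑ k, p k = 1) (hs : ∀ m, 0 ≤ s m)
    (hs1 : ∑ m, s m = 1) (hF : ∀ k m, ‖F k m‖ = 1) (hU' : Uᴴ * U = 1)
    (hA : ampMat p s F * (ampMat p s F)ᴴ = U * Matrix.diagonal (fun i => (lam i : ℂ)) * Uᴴ) :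
    interp p s F U lam 0 = 1 := by
  unfold interp
  simp_rw [zpw_zero_mul_eigenrow hU' hA, dualMat_zero hp hs]
  have h : (ampMat p s F)ᴴ * U = (Uᴴ * ampMat p s F)ᴴ := by
    rw [Matrix.conjTranspose_mul, Matrix.conjTranspose_conjTranspose]
  simp_rw [h, ← Matrix.mul_apply, ← sum_row_normSq, sum_normSq_eigenrow hU' hA,
    ← Complex.ofReal_sum, sum_eigenvalues hp hp1 hs hs1 hF hU' hA, Complex.ofReal_one]

/-- The derivative at `0` is `H(p) + H(s) - H(lam)`, with natural logarithms. -/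
lemma hasDerivAt_interp_zero (hp : ∀ k, 0 ≤ p k) (hp1 : ∑ k, p k = 1) (hs : ∀ m, 0 ≤ s m)
    (hs1 : ∑ m, s m = 1) (hF : ∀ k m, ‖F k m‖ = 1) (hU : U * Uᴴ = 1) (hU' : Uᴴ * U = 1)
    (hA : ampMat p s F * (ampMat p s F)ᴴ = U * Matrix.diagonal (fun i => (lam i : ℂ)) * Uᴴ) :
    HasDerivAt (interp p s F U lam)
      ((∑ i, lam i * Real.log (lam i) - ∑ m, s m * Real.log (s m)
        - ∑ k, p k * Real.log (p k) : ℝ) : ℂ) 0 := by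
  classical
  have h := HasDerivAt.fun_sum (𝕜 := ℂ) (F := ℂ) (u := Finset.univ) fun i (_ : i ∈ Finset.univ) =>
    HasDerivAt.fun_sum (u := Finset.univ) fun m (_ : m ∈ Finset.univ) =>
    ((hasDerivAt_zpw (lam i) 0).mul_const ((Uᴴ * ampMat p s F) i m)).mul
      (hasDerivAt_dualMat_mul (p := p) (s := s) (F := F) (U := U) m i 0)
  refine h.congr_deriv ?_
  simp_rw [mul_assoc _ (zpw _ _), zpw_zero_mul_eigenrow hU' hA, dualMat_zero hp hs]
  set A := ampMat p s F with hAdef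
  set Lp := Matrix.diagonal (fun k => (Real.log (p k) : ℂ)) with hLp
  set Ls := Matrix.diagonal (fun m => (Real.log (s m) : ℂ)) with hLs
  have hstar : Aᴴ * U = (Uᴴ * A)ᴴ := by
    rw [Matrix.conjTranspose_mul, Matrix.conjTranspose_conjTranspose]
  have e1 : ∑ i, ∑ m, (Real.log (lam i) * (Uᴴ * A) i m) * (Aᴴ * U) m i
      = ((∑ i, lam i * Real.log (lam i) : ℝ) : ℂ) := by
    push_cast
    refine Finset.sum_congr rfl fun i _ => ?_
    simp_rw [mul_assoc]
    rw [← Finset.mul_sum, ← Matrix.mul_apply, hstar, ← sum_row_normSq,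
      sum_normSq_eigenrow hU' hA, mul_comm]
  have e2 : ∑ i, ∑ m, (Uᴴ * A) i m * (Real.log (s m) * (Aᴴ * U) m i)
      = ((∑ m, s m * Real.log (s m) : ℝ) : ℂ) := by
    have : ∑ i, ∑ m, (Uᴴ * A) i m * (Real.log (s m) * (Aᴴ * U) m i)
        = Matrix.trace ((Uᴴ * A) * (Ls * (Aᴴ * U))) := by
      simp only [Matrix.trace, Matrix.diag, Matrix.mul_apply (M := Uᴴ * A), hLs,
        Matrix.diagonal_mul]
    rw [this, Matrix.trace_mul_comm]
    have : Ls * (Aᴴ * U) * (Uᴴ * A) = Ls * (Aᴴ * A) := by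
      simp only [Matrix.mul_assoc]
      rw [← Matrix.mul_assoc U, hU, Matrix.one_mul]
    rw [this]
    simp only [Matrix.trace, Matrix.diag, hLs, Matrix.diagonal_mul, hAdef,
      ampMat_self_mul_diag hp hs hp1 hF]
    push_cast
    exact Finset.sum_congr rfl fun m _ => mul_comm _ _
  have e3 : ∑ i, ∑ m, (Uᴴ * A) i m * (Aᴴ * (Lp * U)) m i
      = ((∑ k, p k * Real.log (p k) : ℝ) : ℂ) := by
    have : ∑ i, ∑ m, (Uᴴ * A) i m * (Aᴴ * (Lp * U)) m i
        = Matrix.trace ((Uᴴ * A) * (Aᴴ * (Lp * U))) := by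
      simp only [Matrix.trace, Matrix.diag, Matrix.mul_apply (M := Uᴴ * A)]
    rw [this, Matrix.trace_mul_comm]
    have h3 : Aᴴ * (Lp * U) * (Uᴴ * A) = Aᴴ * (Lp * A) := by
      simp only [Matrix.mul_assoc]
      rw [← Matrix.mul_assoc U, hU, Matrix.one_mul]
    rw [h3, Matrix.trace_mul_comm, Matrix.mul_assoc]
    simp only [Matrix.trace, Matrix.diag, hLp, Matrix.diagonal_mul, hAdef,
      ampMat_mul_self_diag hp hs hs1 hF]
    push_cast
    exact Finset.sum_congr rfl fun m _ => mul_comm _ _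
  rw [Complex.ofReal_sub, Complex.ofReal_sub, ← e1, ← e2, ← e3, ← Finset.sum_sub_distrib,
    ← Finset.sum_sub_distrib]
  refine Finset.sum_congr rfl fun i _ => ?_
  rw [← Finset.sum_sub_distrib, ← Finset.sum_sub_distrib]
  exact Finset.sum_congr rfl fun m _ => by ring

/-- Entropic inequality `H(p) + H(s) ≤ H(A Aᴴ) + log N` in natural logarithms, obtained by
comparing `interp` with `N ^ w` at the boundary point `0` of the strip. -/
lemma entropy_add_le (hp : ∀ k, 0 ≤ p k) (hp1 : ∑ k, p k = 1) (hs : ∀ m, 0 ≤ s m)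
    (hs1 : ∑ m, s m = 1) (hF : ∀ k m, ‖F k m‖ = 1) (hU : U * Uᴴ = 1) (hU' : Uᴴ * U = 1)
    (hN : 0 < N) (hFF : F * Fᴴ = (N : ℂ) • 1)
    (hA : ampMat p s F * (ampMat p s F)ᴴ = U * Matrix.diagonal (fun i => (lam i : ℂ)) * Uᴴ) :
    ∑ i, lam i * Real.log (lam i) - ∑ m, s m * Real.log (s m) - ∑ k, p k * Real.log (p k)
      ≤ Real.log N := by
  have hlam : ∀ i, 0 ≤ lam i := fun i => by
    rw [← sum_normSq_eigenrow hU' hA i]; positivity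
  have hle {α : Type _} [Fintype α] {q : α → ℝ} (hq : ∀ a, 0 ≤ q a) (hq1 : ∑ a, q a = 1) (a : α) :
      q a ≤ 1 := hq1 ▸ Finset.single_le_sum (fun b _ => hq b) (Finset.mem_univ a)
  have hlamle := hle hlam (sum_eigenvalues hp hp1 hs hs1 hF hU' hA)
  have hsle : ∀ m, s m ≤ 1 :=
    fun a => hs1 ▸ Finset.single_le_sum (fun b _ => hs b) (Finset.mem_univ a)
  have hple := hle hp hp1
  have hexp (z : ℂ) : HasDerivAt (fun z : ℂ => Complex.exp (-z * Real.log N))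
      (-(Real.log N) * Complex.exp (-z * Real.log N)) z := by
    have := ((hasDerivAt_id z).neg.mul_const (Real.log N : ℂ)).cexp
    simpa [mul_comm] using this
  have hnexp (z : ℂ) : ‖Complex.exp (-z * Real.log N)‖ = N ^ (-z.re) := by
    rw [Complex.norm_exp, Complex.re_mul_ofReal, Real.rpow_def_of_pos hN, mul_comm, Complex.neg_re]
  obtain ⟨C, hC⟩ := exists_norm_interp_le (F := F) (U := U) hp hs hlam hsle hple hlamle
  have hC0 : 0 ≤ C := (norm_nonneg _).trans (hC 0 (by simp) (by simp))
  -- Dividing by `N ^ w` normalises the bound on the right edge.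
  have key := re_deriv_nonpos_of_strip
    (g := fun z => interp p s F U lam z * Complex.exp (-z * Real.log N))
    (C := C * max 1 (N ^ (-(1 / 2) : ℝ)))
    (differentiable_interp.mul fun z => (hexp z).differentiableAt)
    ((hasDerivAt_interp_zero hp hp1 hs hs1 hF hU hU' hA).mul (hexp 0))
    (by simp [interp_zero hp hp1 hs hs1 hF hU' hA])
    (fun z h0 h1 => by
      rw [norm_mul, hnexp]
      gcongr
      · exact hC z h0 h1
      · rcases le_total 1 N with h | h
        · exact le_max_of_le_left (Real.rpow_le_one_of_one_le_of_nonpos h (by linarith))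
        · exact le_max_of_le_right (Real.rpow_le_rpow_of_exponent_ge hN h (by linarith)))
    (fun z hz => by
      rw [norm_mul, hnexp, hz]
      simpa using norm_interp_le_left hp hp1 hs hs1 hF hU hU' hA hlam hlamle hz)
    (fun z hz => by
      rw [norm_mul, hnexp, hz, Real.rpow_neg hN.le, ← Real.sqrt_eq_rpow]
      refine mul_inv_le_one_of_le₀ ?_ (Real.sqrt_nonneg _)
      exact norm_interp_le_right hp hp1 hs hs1 hF hU' hN.le hFF hA hlam hsle hple hz)
  rw [interp_zero hp hp1 hs hs1 hF hU' hA] at key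
  simp only [neg_zero, zero_mul, Complex.exp_zero, mul_one, one_mul, ← Complex.ofReal_neg,
    ← Complex.ofReal_add, Complex.ofReal_re] at key
  linarith

end Entropic

/-! ### Elementary entropy facts -/

/-- Shannon entropy is at most the logarithm of the number of outcomes, in natural logarithms. -/
lemma neg_sum_mul_log_le {α : Type*} [Fintype α] [Nonempty α] {r : α → ℝ} (hr : ∀ a, 0 ≤ r a)
    (hr1 : ∑ a, r a = 1) : -∑ a, r a * Real.log (r a) ≤ Real.log (Fintype.card α) := by
  have hN : (0 : ℝ) < Fintype.card α := by exact_mod_cast Fintype.card_pos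
  set N : ℝ := (Fintype.card α : ℝ) with hNdef
  have h : ∑ a, Real.negMulLog (N * r a) ≤ ∑ a, (1 - N * r a) :=
    Finset.sum_le_sum fun a _ => Real.negMulLog_le_one_sub_self (mul_nonneg hN.le (hr a))
  simp only [Real.negMulLog_mul, Finset.sum_add_distrib, Finset.sum_sub_distrib, ← Finset.sum_mul,
    ← Finset.mul_sum, hr1, Finset.sum_const, Finset.card_univ, nsmul_eq_mul, mul_one,
    ← hNdef, one_mul, sub_self] at h
  simp only [Real.negMulLog_eq_neg, Finset.sum_neg_distrib] at h
  have hmul : N * (-∑ a, r a * Real.log (r a) - Real.log N) ≤ 0 := by linarith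
  linarith [nonpos_of_mul_nonpos_right hmul hN]

/-- The eigenvalues of a real diagonal matrix are its diagonal entries, up to order. -/
lemma vnEntropy_diagonal {ι : Type*} [Fintype ι] [DecidableEq ι] (p : ι → ℝ) :
    vnEntropy (Matrix.diagonal fun k => (p k : ℂ)) = -∑ k, p k * Real.logb 2 (p k) := by
  have hH : (Matrix.diagonal fun k => (p k : ℂ)).IsHermitian := by
    rw [Matrix.isHermitian_diagonal_iff]
    intro k
    simp [isSelfAdjoint_iff]
  rw [vnEntropy, dif_pos hH]
  have h := hH.roots_charpoly_eq_eigenvalues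
  rw [Matrix.charpoly_diagonal, Polynomial.roots_prod _ _
    (by simp [Finset.prod_ne_zero_iff, Polynomial.X_sub_C_ne_zero])] at h
  simp only [Polynomial.roots_X_sub_C, Multiset.bind_singleton] at h
  have h2 := congrArg (fun M : Multiset ℂ => (M.map fun z => z.re * Real.logb 2 z.re).sum) h
  simp only [Multiset.map_map, Function.comp_def, Complex.ofReal_re] at h2
  exact congrArg Neg.neg h2.symm

/-! ### Phase-flip environment states -/

section Channel

variable {d : ℕ}

/-- The `d × d²` matrix of phases `e^{2πi k(j+l)/d}`. -/
def phaseMat (d : ℕ) : Matrix (Fin d) (Fin d × Fin d) ℂ :=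
  Matrix.of fun k jl => Complex.exp (2 * Real.pi * Complex.I * (k : ℕ) *
    ((jl.1 : ℕ) + (jl.2 : ℕ)) / d)

lemma norm_phaseMat (k : Fin d) (jl : Fin d × Fin d) : ‖phaseMat d k jl‖ = 1 := by
  rw [phaseMat, Matrix.of_apply, ← Complex.norm_exp_ofReal_mul_I
    (2 * Real.pi * (k : ℕ) * ((jl.1 : ℕ) + (jl.2 : ℕ)) / d)]
  congr 2
  push_cast
  ring

/-- Orthogonality of the characters of `ℤ/d`: an entry of `F Fᴴ` is the square of a geometric
sum over the `d`-th roots of unity. -/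
lemma phaseMat_mul_conjTranspose (hd : 0 < d) :
    phaseMat d * (phaseMat d)ᴴ = ((((d : ℝ) ^ 2 : ℝ)) : ℂ) • (1 : Matrix (Fin d) (Fin d) ℂ) := by
  have hd0 : (d : ℂ) ≠ 0 := by exact_mod_cast hd.ne'
  ext k k'
  rcases eq_or_ne k k' with rfl | hk
  · rw [← sum_row_normSq]
    simp [norm_phaseMat, sq]
  · set ζ : ℂ := Complex.exp (2 * Real.pi * Complex.I * ((k : ℕ) - (k' : ℕ)) / d) with hζ
    have hζd : ζ ^ d = 1 := by
      rw [hζ, ← Complex.exp_nat_mul, Complex.exp_eq_one_iff]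
      exact ⟨(k : ℕ) - (k' : ℕ), by push_cast; field_simp⟩
    have hζ1 : ζ ≠ 1 := by
      rw [hζ, Ne, Complex.exp_eq_one_iff]
      rintro ⟨n, hn⟩
      have h2 : (2 * Real.pi * Complex.I : ℂ) ≠ 0 := Complex.two_pi_I_ne_zero
      have h3 : ((k : ℕ) - (k' : ℕ) : ℂ) = n * d := by
        rw [div_eq_iff hd0] at hn
        apply mul_left_cancel₀ h2
        rw [hn]; ring
      have h4 : ((k : ℕ) - (k' : ℕ) : ℤ) = n * d := by exact_mod_cast h3
      have h5 : (d : ℤ) ∣ ((k : ℕ) - (k' : ℕ) : ℤ) := ⟨n, by rw [h4, mul_comm]⟩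
      have := Int.eq_zero_of_abs_lt_dvd h5 (by rw [abs_lt]; omega)
      exact hk (Fin.ext (by omega))
    have hgeom : ∑ j : Fin d, ζ ^ (j : ℕ) = 0 := by
      rw [Fin.sum_univ_eq_sum_range (fun j => ζ ^ j) d, geom_sum_eq hζ1, hζd]; simp
    have hterm (jl : Fin d × Fin d) :
        phaseMat d k jl * (phaseMat d)ᴴ jl k' = ζ ^ (jl.1 : ℕ) * ζ ^ (jl.2 : ℕ) := by
      rw [← pow_add, hζ, ← Complex.exp_nat_mul]
      simp only [phaseMat, Matrix.conjTranspose_apply, Matrix.of_apply, ← starRingEnd_apply,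
        ← Complex.exp_conj, ← Complex.exp_add]
      congr 1
      simp [Complex.conj_ofNat]
      ring
    rw [Matrix.mul_apply, Finset.sum_congr rfl fun jl _ => hterm jl, Fintype.sum_prod_type]
    simp [← Finset.mul_sum, hgeom, hk]

/-- The averaged environment state is the Gram-type product `A Aᴴ`. -/
lemma sum_smul_proj_eq (p : Fin d → ℝ) {r : Fin d × Fin d → ℝ} (hr : ∀ jl, 0 ≤ r jl) :
    ∑ jl : Fin d × Fin d, ((r jl : ℝ) : ℂ) • proj (phiVec p jl.1 jl.2)
      = ampMat p r (phaseMat d) * (ampMat p r (phaseMat d))ᴴ := by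
  ext k k'
  rw [Matrix.sum_apply, Matrix.mul_apply]
  refine Finset.sum_congr rfl fun jl _ => ?_
  have hsq : (r jl : ℂ) = (Real.sqrt (r jl) : ℂ) * (Real.sqrt (r jl) : ℂ) := by
    rw [← Complex.ofReal_mul, Real.mul_self_sqrt (hr jl)]
  simp only [Matrix.smul_apply, proj, phiVec, ampMat, phaseMat, Matrix.of_apply,
    Matrix.conjTranspose_apply, star_mul', smul_eq_mul]
  rw [hsq]
  simp
  ring

lemma sum_uniform_smul_proj_eq (hd : 0 < d) {p : Fin d → ℝ} (hp : ∀ k, 0 ≤ p k) :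
    ∑ jl : Fin d × Fin d, ((((d : ℝ) ^ 2)⁻¹ : ℝ) : ℂ) • proj (phiVec p jl.1 jl.2)
      = Matrix.diagonal fun k => (p k : ℂ) := by
  have hd0 : (d : ℂ) ≠ 0 := by exact_mod_cast hd.ne'
  ext k k'
  have h := congrFun (congrFun (phaseMat_mul_conjTranspose hd) k) k'
  rw [Matrix.mul_apply] at h
  calc _ = (((d : ℝ) ^ 2)⁻¹ : ℝ) * (Real.sqrt (p k) * Real.sqrt (p k')) *
        ∑ jl, phaseMat d k jl * (phaseMat d)ᴴ jl k' := by
        rw [Matrix.sum_apply, Finset.mul_sum]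
        refine Finset.sum_congr rfl fun jl _ => ?_
        simp only [Matrix.smul_apply, proj, phiVec, phaseMat, Matrix.of_apply,
          Matrix.conjTranspose_apply, star_mul', smul_eq_mul]
        simp
        ring
    _ = _ := by
        rw [h]
        rcases eq_or_ne k k' with rfl | hk
        · rw [← Complex.ofReal_mul (√(p k)), Real.mul_self_sqrt (hp k)]
          simp
          field_simp
        · simp [hk]

/-- The base-`2` form of the entropic inequality for the phase-flip states:
`H(p) + H(r) ≤ H(∑ r_{jl} φ_{jl}) + 2 log₂ d`. -/
lemma phase_flip_entropy_le (hd : 0 < d) {p : Fin d → ℝ} (hp : ∀ k, 0 ≤ p k)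
    (hps : ∑ k, p k = 1) {r : Fin d × Fin d → ℝ} (hr : ∀ jl, 0 ≤ r jl) (hr1 : ∑ jl, r jl = 1) :
    (-∑ k, p k * Real.logb 2 (p k)) + (-∑ jl, r jl * Real.logb 2 (r jl)) ≤
      vnEntropy (∑ jl : Fin d × Fin d, ((r jl : ℝ) : ℂ) • proj (phiVec p jl.1 jl.2))
        + 2 * Real.logb 2 d := by
  rw [sum_smul_proj_eq p hr]
  have hH := Matrix.isHermitian_mul_conjTranspose_self (ampMat p r (phaseMat d))
  rw [vnEntropy, dif_pos hH]
  set U : Matrix (Fin d) (Fin d) ℂ := hH.eigenvectorUnitary.1 with hUdef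
  have hU : U * Uᴴ = 1 := Unitary.coe_mul_star_self hH.eigenvectorUnitary
  have hU' : Uᴴ * U = 1 := Unitary.coe_star_mul_self hH.eigenvectorUnitary
  have hA : ampMat p r (phaseMat d) * (ampMat p r (phaseMat d))ᴴ
      = U * Matrix.diagonal (fun i => (hH.eigenvalues i : ℂ)) * Uᴴ := by
    have := hH.spectral_theorem
    rw [Unitary.conjStarAlgAut_apply] at this
    exact this
  have hd' : (0 : ℝ) < (d : ℝ) ^ 2 := by positivity
  have key := entropy_add_le hp hps hr hr1 norm_phaseMat hU hU' hd'
    (phaseMat_mul_conjTranspose hd) hA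
  rw [Real.log_pow] at key
  have hlog2 : 0 < Real.log 2 := Real.log_pos one_lt_two
  simp only [Real.logb, ← mul_div_assoc, ← Finset.sum_div]
  rw [← sub_nonneg]
  have : 0 ≤ (2 * Real.log d - (∑ i, hH.eigenvalues i * Real.log (hH.eigenvalues i)
      - ∑ m, r m * Real.log (r m) - ∑ k, p k * Real.log (p k))) / Real.log 2 :=
    div_nonneg (by push_cast at key; linarith) hlog2.le
  refine this.trans_eq ?_
  ring

end Channel

/-- For the collective phase-flip channel's environment states,
`2H(r) − H(∑ r_{jl} φ_{jl}) ≤ 4 log₂ d − H(p)` for every distribution `r`, with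
equality at the uniform distribution `r_{jl} = 1/d²`; hence the maximum equals
`4 log₂ d − H(p)`. -/
theorem phase_flip_sum_rate_maximum {d : ℕ} (hd : 2 ≤ d)
    (p : Fin d → ℝ) (hp : ∀ k, 0 ≤ p k) (hps : ∑ k, p k = 1) :
    (∀ r : Fin d × Fin d → ℝ, (∀ jl, 0 ≤ r jl) → (∑ jl, r jl) = 1 →
      2 * (-∑ jl, r jl * Real.logb 2 (r jl)) -
          vnEntropy (∑ jl : Fin d × Fin d, ((r jl : ℝ) : ℂ) • proj (phiVec p jl.1 jl.2))
        ≤ 4 * Real.logb 2 d - (-∑ k, p k * Real.logb 2 (p k)))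
    ∧ 2 * (-∑ _jl : Fin d × Fin d, (((d : ℝ) ^ 2)⁻¹) * Real.logb 2 (((d : ℝ) ^ 2)⁻¹)) -
          vnEntropy (∑ jl : Fin d × Fin d,
            ((((d : ℝ) ^ 2)⁻¹ : ℝ) : ℂ) • proj (phiVec p jl.1 jl.2))
        = 4 * Real.logb 2 d - (-∑ k, p k * Real.logb 2 (p k)) := by
  have hd0 : 0 < d := by omega
  have hlog2 : 0 < Real.log 2 := Real.log_pos one_lt_two
  have : Nonempty (Fin d × Fin d) := ⟨⟨⟨0, hd0⟩, ⟨0, hd0⟩⟩⟩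
  refine ⟨fun r hr hr1 => ?_, ?_⟩
  · have h1 := phase_flip_entropy_le hd0 hp hps hr hr1
    have h2 : -∑ jl, r jl * Real.logb 2 (r jl) ≤ 2 * Real.logb 2 d := by
      have h := div_le_div_of_nonneg_right (neg_sum_mul_log_le hr hr1) hlog2.le
      simp only [Fintype.card_prod, Fintype.card_fin, ← sq, Nat.cast_pow, Real.log_pow] at h
      simp only [Real.logb, ← mul_div_assoc, ← Finset.sum_div, ← neg_div]
      exact_mod_cast h
    linarith
  · rw [sum_uniform_smul_proj_eq hd0 hp, vnEntropy_diagonal]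
    have hd1 : (d : ℝ) ≠ 0 := by exact_mod_cast hd0.ne'
    simp only [Finset.sum_const, Finset.card_univ, Fintype.card_prod, Fintype.card_fin,
      nsmul_eq_mul, Real.logb_inv, Real.logb_pow]
    push_cast
    field_simp
    ring
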